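/- Let P be a real symmetric positive definite m×m matrix, let Q be a real symmetric positive semidefinite k×k matrix and G a real symmetric positive semidefinite l×l matrix, and let B_τ be a real k×m matrix and B_c a real l×m matrix, each with trivial kernel (B_τ x = 0 ⟹ x = 0 and B_c x = 0 ⟹ x = 0). Then tr((B_τᵀ Q B_τ + B_cᵀ G B_c) P) ≤ (λ_max(Q) λ_max(B_τᵀ B_τ) + λ_max(G) λ_max(B_cᵀ B_c)) · tr(P), where λ_max(·) denotes the largest eigenvalue of a real symmetric matrix. -/

import Mathlib

open Matrix

theorem aux_psd {n : ℕ} (H : Matrix (Fin n) (Fin n) ℝ) (hH : H.IsHermitian) :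
    ((⨆ i, hH.eigenvalues i) • (1 : Matrix (Fin n) (Fin n) ℝ) - H).PosSemidef := by
  set c := ⨆ i, hH.eigenvalues i with hc
  have hD : (diagonal (fun i => c - hH.eigenvalues i)).PosSemidef := by
    apply PosSemidef.diagonal
    intro i
    exact sub_nonneg.2 (le_ciSup (f := hH.eigenvalues) (Set.finite_range _).bddAbove i)
  have h1 := hD.mul_mul_conjTranspose_same (hH.eigenvectorUnitary : Matrix (Fin n) (Fin n) ℝ)
  have h2 : diagonal (fun i => c - hH.eigenvalues i)
      = c • (1 : Matrix (Fin n) (Fin n) ℝ) - diagonal hH.eigenvalues := by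
    rw [smul_one_eq_diagonal, diagonal_sub]
  have h3 := hH.spectral_theorem
  rw [Unitary.conjStarAlgAut_apply] at h3
  have h4 : (hH.eigenvectorUnitary : Matrix (Fin n) (Fin n) ℝ) *
      (hH.eigenvectorUnitary : Matrix (Fin n) (Fin n) ℝ)ᴴ = 1 :=
    Unitary.coe_mul_star_self hH.eigenvectorUnitary
  have h5 : H = (hH.eigenvectorUnitary : Matrix (Fin n) (Fin n) ℝ) * diagonal hH.eigenvalues *
      (hH.eigenvectorUnitary : Matrix (Fin n) (Fin n) ℝ)ᴴ := h3
  rw [h2, Matrix.mul_sub, Matrix.sub_mul, ← h5, Matrix.mul_smul, Matrix.mul_one,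
    Matrix.smul_mul, h4] at h1
  exact h1

open scoped MatrixOrder in
theorem aux_trace {n : ℕ} (A P : Matrix (Fin n) (Fin n) ℝ) (hA : A.PosSemidef)
    (hP : P.PosSemidef) : 0 ≤ (A * P).trace := by
  obtain ⟨C, hC⟩ := CStarAlgebra.nonneg_iff_eq_star_mul_self.1 hP.nonneg
  rw [star_eq_conjTranspose] at hC
  subst hC
  rw [← Matrix.mul_assoc, Matrix.trace_mul_comm, ← Matrix.mul_assoc]
  exact (hA.mul_mul_conjTranspose_same C).trace_nonneg

theorem aux_one {m k : ℕ} (P : Matrix (Fin m) (Fin m) ℝ)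
    (Q : Matrix (Fin k) (Fin k) ℝ) (B : Matrix (Fin k) (Fin m) ℝ)
    (hP : P.PosSemidef) (hQ : Q.PosSemidef) (hB : (Bᵀ * B).IsHermitian) :
    ((Bᵀ * Q * B) * P).trace ≤
      ((⨆ i, hQ.isHermitian.eigenvalues i) * (⨆ i, hB.eigenvalues i)) * P.trace := by
  have hq := (aux_psd Q hQ.isHermitian).conjTranspose_mul_mul_same B
  have hb := aux_psd _ hB
  have h0 : 0 ≤ ⨆ i, hQ.isHermitian.eigenvalues i :=
    Real.iSup_nonneg fun i => hQ.eigenvalues_nonneg i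
  have t1 := aux_trace _ P hq hP
  have t2 := mul_nonneg h0 (aux_trace _ P hb hP)
  rw [conjTranspose_eq_transpose_of_trivial] at t1
  simp only [Matrix.mul_sub, Matrix.sub_mul, Matrix.mul_smul, Matrix.smul_mul, Matrix.mul_one,
    Matrix.one_mul, trace_sub, trace_smul, smul_eq_mul] at t1 t2
  nlinarith

/-- The upper bound of Lemma 3 (fullbound):
`tr((B_τᵀ Q B_τ + B_cᵀ G B_c) P) ≤ (λ_max(Q) λ_max(B_τᵀ B_τ) + λ_max(G) λ_max(B_cᵀ B_c)) tr P`. -/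
theorem fullbound_upper {m k l : ℕ} (P : Matrix (Fin m) (Fin m) ℝ)
    (Q : Matrix (Fin k) (Fin k) ℝ) (G : Matrix (Fin l) (Fin l) ℝ)
    (Bτ : Matrix (Fin k) (Fin m) ℝ) (Bc : Matrix (Fin l) (Fin m) ℝ)
    (hP : P.PosDef) (hQ : Q.PosSemidef) (hG : G.PosSemidef)
    (hBτ : ∀ x : Fin m → ℝ, Bτ.mulVec x = 0 → x = 0)
    (hBc : ∀ x : Fin m → ℝ, Bc.mulVec x = 0 → x = 0)
    (hBτBτ : (Bτᵀ * Bτ).IsHermitian) (hBcBc : (Bcᵀ * Bc).IsHermitian) :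
    ((Bτᵀ * Q * Bτ + Bcᵀ * G * Bc) * P).trace ≤
      ((⨆ i, hQ.isHermitian.eigenvalues i) * (⨆ i, hBτBτ.eigenvalues i) +
        (⨆ i, hG.isHermitian.eigenvalues i) * (⨆ i, hBcBc.eigenvalues i)) * P.trace := by
  rw [Matrix.add_mul, trace_add, add_mul]
  exact add_le_add (aux_one P Q Bτ hP.posSemidef hQ hBτBτ) (aux_one P G Bc hP.posSemidef hG hBcBc)
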